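/- arXiv:1606.01661 — 2 statements merged into one kernel-verified Lean document; each statement's English description precedes it below -/
import Mathlib

section
/- For every nonnegative integer j and every real x, the absolute value of the j-th (physicists') Hermite polynomial satisfies |H_j(x)| < k·√(j!)·2^(j/2)·exp(x²/2), where k = 1.086435. -/
open Real Filter MeasureTheory

/-- Physicists' Hermite polynomials via the standard recurrence
`H₀ = 1`, `H₁(x) = 2x`, `H_{n+2}(x) = 2x H_{n+1}(x) - 2(n+1) H_n(x)`. -/
noncomputable def physHermite : ℕ → ℝ → ℝ
  | 0, _ => 1
  | 1, x => 2 * x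
  | n+2, x => 2 * x * physHermite (n+1) x - 2 * ((n : ℝ) + 1) * physHermite n x

/-!
The Hermite function `u = H_n(x) exp (-x² / 2)` solves `u'' + (N - x²) u = 0` with `N = 2n + 1`.
Where `x² < N`, the Liouville–Green substitution `u = ρ w` with `ρ = (N - x²) ^ (-1/4)`, followed by
Sonin's monotonicity argument for `w`, gives `√N √(N - x²) u(x)² ≤ N u(0)² + u'(0)²`. For
`x² ≤ 2n` the factor `√(N - x²)` is at least `1`, while `u` is positive and decreasing beyond
`√(2n)`. So everything reduces to the values at the origin, one of `H_n(0)`, `H_{n+1}(0)` being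
zero and the other controlled by a Wallis-type inequality.
-/

/-- The Ermakov–Lewis energy of a solution `u` (with derivative `u'`) of `u'' + φ u = 0`, relative
to a solution `ρ` (with derivative `ρ'`) of `ρ'' + φ ρ = r / ρ³`. It is conserved for constant `r`;
in terms of `w = u / ρ` it is Sonin's function `w² + (ρ² w')² / r`. -/
noncomputable def ermakovEnergy (r ρ ρ' u u' : ℝ → ℝ) (x : ℝ) : ℝ :=
  (u x / ρ x) ^ 2 + (ρ x * u' x - ρ' x * u x) ^ 2 / r x

section Ermakov

variable {φ r r' ρ ρ' u u' : ℝ → ℝ}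

lemma hasDerivAt_ermakovEnergy {x : ℝ} (hr₀ : r x ≠ 0) (hρ₀ : ρ x ≠ 0)
    (hu : HasDerivAt u (u' x) x) (hu' : HasDerivAt u' (-(φ x * u x)) x)
    (hρ : HasDerivAt ρ (ρ' x) x) (hρ' : HasDerivAt ρ' (r x / ρ x ^ 3 - φ x * ρ x) x)
    (hr : HasDerivAt r (r' x) x) :
    HasDerivAt (ermakovEnergy r ρ ρ' u u')
      (-(r' x * ((ρ x * u' x - ρ' x * u x) / r x) ^ 2)) x := by
  have h := ((hu.div hρ hρ₀).pow 2).add ((((hρ.mul hu').sub (hρ'.mul hu)).pow 2).div hr hr₀)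
  refine h.congr_deriv ?_
  simp only [Pi.div_apply, Pi.sub_apply, Pi.mul_apply, Pi.pow_apply, Nat.cast_ofNat,
    Nat.add_one_sub_one, pow_one]
  field_simp
  ring

lemma antitoneOn_ermakovEnergy {s : Set ℝ} (hs : Convex ℝ s) (hr₀ : ∀ x ∈ s, r x ≠ 0)
    (hρ₀ : ∀ x ∈ s, ρ x ≠ 0) (hu : ∀ x ∈ s, HasDerivAt u (u' x) x)
    (hu' : ∀ x ∈ s, HasDerivAt u' (-(φ x * u x)) x) (hρ : ∀ x ∈ s, HasDerivAt ρ (ρ' x) x)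
    (hρ' : ∀ x ∈ s, HasDerivAt ρ' (r x / ρ x ^ 3 - φ x * ρ x) x)
    (hr : ∀ x ∈ s, HasDerivAt r (r' x) x) (hr' : ∀ x ∈ s, 0 ≤ r' x) :
    AntitoneOn (ermakovEnergy r ρ ρ' u u') s := by
  have hderiv (x : ℝ) (hx : x ∈ s) := hasDerivAt_ermakovEnergy (hr₀ x hx) (hρ₀ x hx) (hu x hx)
    (hu' x hx) (hρ x hx) (hρ' x hx) (hr x hx)
  refine antitoneOn_of_hasDerivWithinAt_nonpos hs
    (fun x hx ↦ (hderiv x hx).continuousAt.continuousWithinAt)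
    (fun x hx ↦ (hderiv x (interior_subset hx)).hasDerivWithinAt) fun x hx ↦ ?_
  exact neg_nonpos.mpr (mul_nonneg (hr' x (interior_subset hx)) (sq_nonneg _))

end Ermakov

/-- The Liouville–Green amplitude `(N - x²) ^ (-1/4)` of the oscillator `u'' + (N - x²) u = 0`,
meaningful for `x² < N`. -/
noncomputable def oscAmplitude (N x : ℝ) : ℝ := (N - x ^ 2) ^ (-(1 / 4) : ℝ)

/-- The coefficient `r` in the Ermakov equation `ρ'' + (N - x²) ρ = r / ρ³` satisfied by
`ρ = oscAmplitude N`. -/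
noncomputable def oscCoeff (N x : ℝ) : ℝ :=
  1 + oscAmplitude N x ^ 8 / 2 + 5 / 4 * x ^ 2 * oscAmplitude N x ^ 12

section Oscillator

variable {N x : ℝ}

lemma oscAmplitude_pos (hx : x ^ 2 < N) : 0 < oscAmplitude N x :=
  rpow_pos_of_pos (sub_pos.mpr hx) _

lemma sqrt_mul_oscAmplitude_sq (hx : x ^ 2 < N) : √(N - x ^ 2) * oscAmplitude N x ^ 2 = 1 := by
  have hφ : 0 < N - x ^ 2 := sub_pos.mpr hx
  rw [oscAmplitude, sqrt_eq_rpow, ← rpow_mul_natCast hφ.le, ← rpow_add hφ]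
  norm_num

lemma mul_oscAmplitude_pow_four (hx : x ^ 2 < N) : (N - x ^ 2) * oscAmplitude N x ^ 4 = 1 := by
  calc (N - x ^ 2) * oscAmplitude N x ^ 4 = (√(N - x ^ 2) * oscAmplitude N x ^ 2) ^ 2 := by
        rw [mul_pow, sq_sqrt (sub_nonneg.mpr hx.le)]; ring
    _ = 1 := by rw [sqrt_mul_oscAmplitude_sq hx, one_pow]

lemma one_le_oscCoeff (N x : ℝ) : 1 ≤ oscCoeff N x := by
  have : 0 ≤ oscAmplitude N x ^ 8 / 2 + 5 / 4 * x ^ 2 * oscAmplitude N x ^ 12 := by positivity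
  rw [oscCoeff]
  linarith

lemma hasDerivAt_oscAmplitude (hx : x ^ 2 < N) :
    HasDerivAt (oscAmplitude N) (x / 2 * oscAmplitude N x ^ 5) x := by
  have hφ : 0 < N - x ^ 2 := sub_pos.mpr hx
  have hpow : oscAmplitude N x ^ 5 = (N - x ^ 2) ^ (-(1 / 4) - 1 : ℝ) := by
    rw [oscAmplitude, ← rpow_mul_natCast hφ.le]
    norm_num
  refine (((hasDerivAt_pow 2 x).const_sub N).rpow_const (Or.inl hφ.ne')).congr_deriv ?_
  rw [hpow]
  push_cast
  ring

lemma hasDerivAt_deriv_oscAmplitude (hx : x ^ 2 < N) :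
    HasDerivAt (fun y ↦ y / 2 * oscAmplitude N y ^ 5)
      (oscCoeff N x / oscAmplitude N x ^ 3 - (N - x ^ 2) * oscAmplitude N x) x := by
  have hρ := (oscAmplitude_pos hx).ne'
  have hφ : (N - x ^ 2) * oscAmplitude N x = 1 / oscAmplitude N x ^ 3 := by
    rw [eq_div_iff (pow_ne_zero 3 hρ), ← mul_oscAmplitude_pow_four hx]
    ring
  refine (((hasDerivAt_id x).div_const 2).mul ((hasDerivAt_oscAmplitude hx).pow 5)).congr_deriv ?_
  rw [oscCoeff, hφ]
  simp only [id, Pi.pow_apply]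
  field_simp
  ring

lemma hasDerivAt_oscCoeff (hx : x ^ 2 < N) :
    HasDerivAt (oscCoeff N) (9 / 2 * x * oscAmplitude N x ^ 12
      + 15 / 2 * x ^ 3 * oscAmplitude N x ^ 16) x := by
  have hρ := hasDerivAt_oscAmplitude hx
  refine ((((hρ.pow 8).div_const 2).const_add 1).add
    (((hasDerivAt_pow 2 x).const_mul (5 / 4)).mul (hρ.pow 12))).congr_deriv ?_
  simp only [Pi.pow_apply]
  push_cast
  ring

/-- The energy of a solution of `u'' + (N - x²) u = 0` relative to its Liouville–Green amplitude. -/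
noncomputable def oscEnergy (N : ℝ) (u u' : ℝ → ℝ) : ℝ → ℝ :=
  ermakovEnergy (oscCoeff N) (oscAmplitude N) (fun y ↦ y / 2 * oscAmplitude N y ^ 5) u u'

lemma antitoneOn_oscEnergy {u u' : ℝ → ℝ} (hx : x ^ 2 < N)
    (hu : ∀ y ∈ Set.Icc 0 x, HasDerivAt u (u' y) y)
    (hu' : ∀ y ∈ Set.Icc 0 x, HasDerivAt u' (-((N - y ^ 2) * u y)) y) :
    AntitoneOn (oscEnergy N u u') (Set.Icc 0 x) := by
  have hlt (y : ℝ) (hy : y ∈ Set.Icc 0 x) : y ^ 2 < N :=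
    (pow_le_pow_left₀ hy.1 hy.2 2).trans_lt hx
  exact antitoneOn_ermakovEnergy (φ := fun y ↦ N - y ^ 2) (convex_Icc 0 x)
    (fun y _ ↦ (zero_lt_one.trans_le (one_le_oscCoeff N y)).ne')
    (fun y hy ↦ (oscAmplitude_pos (hlt y hy)).ne') hu hu'
    (fun y hy ↦ hasDerivAt_oscAmplitude (hlt y hy))
    (fun y hy ↦ hasDerivAt_deriv_oscAmplitude (hlt y hy))
    (fun y hy ↦ hasDerivAt_oscCoeff (hlt y hy))
    fun y hy ↦ by have := hy.1; positivity

lemma sqrt_mul_sq_le_oscEnergy (u u' : ℝ → ℝ) (hx : x ^ 2 < N) :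
    √(N - x ^ 2) * u x ^ 2 ≤ oscEnergy N u u' x := by
  have hρ := eq_one_div_of_mul_eq_one_left (sqrt_mul_oscAmplitude_sq hx)
  have hr := zero_le_one.trans (one_le_oscCoeff N x)
  rw [hρ, oscEnergy, ermakovEnergy, div_pow, one_div_mul_eq_div]
  exact le_add_of_nonneg_right (by positivity)

lemma sqrt_mul_oscEnergy_zero_le (u u' : ℝ → ℝ) (hN : 0 < N) :
    √N * oscEnergy N u u' 0 ≤ N * u 0 ^ 2 + u' 0 ^ 2 := by
  have hN' : (0 : ℝ) ^ 2 < N := by simpa using hN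
  have hρ : √N * oscAmplitude N 0 ^ 2 = 1 := by simpa using sqrt_mul_oscAmplitude_sq hN'
  have hposition : √N * (u 0 / oscAmplitude N 0) ^ 2 = N * u 0 ^ 2 := by
    rw [div_pow, ← mul_div_assoc, div_eq_iff (pow_ne_zero 2 (oscAmplitude_pos hN').ne')]
    linear_combination (-u 0 ^ 2 * √N) * hρ +
      oscAmplitude N 0 ^ 2 * u 0 ^ 2 * mul_self_sqrt hN.le
  have hmomentum : √N * ((oscAmplitude N 0 * u' 0) ^ 2 / oscCoeff N 0) ≤ u' 0 ^ 2 := by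
    rw [← mul_div_assoc, mul_pow, ← mul_assoc, hρ, one_mul]
    exact div_le_self (sq_nonneg _) (one_le_oscCoeff N 0)
  simp only [oscEnergy, ermakovEnergy, zero_div, zero_mul, sub_zero]
  rw [mul_add, hposition]
  gcongr

theorem sqrt_mul_sqrt_mul_sq_le_of_oscillator {u u' : ℝ → ℝ} (hx₀ : 0 ≤ x) (hx : x ^ 2 < N)
    (hu : ∀ y ∈ Set.Icc 0 x, HasDerivAt u (u' y) y)
    (hu' : ∀ y ∈ Set.Icc 0 x, HasDerivAt u' (-((N - y ^ 2) * u y)) y) :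
    √N * √(N - x ^ 2) * u x ^ 2 ≤ N * u 0 ^ 2 + u' 0 ^ 2 := by
  calc √N * √(N - x ^ 2) * u x ^ 2 ≤ √N * oscEnergy N u u' x := by
        rw [mul_assoc]
        gcongr
        exact sqrt_mul_sq_le_oscEnergy u u' hx
    _ ≤ √N * oscEnergy N u u' 0 := by
        gcongr
        exact antitoneOn_oscEnergy hx hu hu' ⟨le_rfl, hx₀⟩ ⟨hx₀, le_rfl⟩ hx₀
    _ ≤ N * u 0 ^ 2 + u' 0 ^ 2 := sqrt_mul_oscEnergy_zero_le u u' ((sq_nonneg x).trans_lt hx)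

end Oscillator

lemma physHermite_add_two (n : ℕ) (x : ℝ) :
    physHermite (n + 2) x =
      2 * x * physHermite (n + 1) x - 2 * ((n : ℝ) + 1) * physHermite n x := by
  rw [physHermite]

lemma physHermite_neg (n : ℕ) (x : ℝ) : physHermite n (-x) = (-1) ^ n * physHermite n x := by
  induction n using Nat.twoStepInduction with
  | zero => simp [physHermite]
  | one => simp [physHermite]
  | more n ih ih_succ =>
    rw [physHermite_add_two, physHermite_add_two, ih, ih_succ]
    ring

lemma physHermite_apply_zero_of_odd {n : ℕ} (hn : Odd n) : physHermite n 0 = 0 := by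
  have h := physHermite_neg n 0
  rw [neg_zero, hn.neg_one_pow] at h
  linarith

lemma hasDerivAt_physHermite (n : ℕ) (x : ℝ) :
    HasDerivAt (physHermite n) (2 * x * physHermite n x - physHermite (n + 1) x) x := by
  induction n using Nat.twoStepInduction with
  | zero =>
    have h : physHermite 0 = fun _ ↦ 1 := by funext y; rw [physHermite]
    simpa [h, physHermite] using hasDerivAt_const x (1 : ℝ)
  | one =>
    have h : physHermite 1 = fun y ↦ 2 * y := by funext y; rw [physHermite]
    refine (h ▸ (hasDerivAt_id x).const_mul 2).congr_deriv ?_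
    simp [physHermite]
  | more n ih ih_succ =>
    have h : physHermite (n + 2) = fun y ↦
        2 * y * physHermite (n + 1) y - 2 * ((n : ℝ) + 1) * physHermite n y :=
      funext (physHermite_add_two n)
    rw [h]
    refine ((((hasDerivAt_id x).const_mul 2).mul ih_succ).sub
      (ih.const_mul (2 * ((n : ℝ) + 1)))).congr_deriv ?_
    simp only [physHermite_add_two (n + 1), physHermite_add_two n, id]
    push_cast
    ring

lemma hasDerivAt_physHermite_succ (n : ℕ) (x : ℝ) :
    HasDerivAt (physHermite (n + 1)) (2 * ((n : ℝ) + 1) * physHermite n x) x := by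
  refine (hasDerivAt_physHermite (n + 1) x).congr_deriv ?_
  rw [physHermite_add_two]
  ring

/-- The (unnormalized) Hermite function `H_n(x) exp (-x² / 2)`, an eigenfunction of the quantum
harmonic oscillator. -/
noncomputable def hermiteFun (n : ℕ) (x : ℝ) : ℝ := physHermite n x * exp (-(x ^ 2 / 2))

lemma hermiteFun_apply_zero (n : ℕ) : hermiteFun n 0 = physHermite n 0 := by
  simp [hermiteFun]

lemma hermiteFun_neg (n : ℕ) (x : ℝ) : hermiteFun n (-x) = (-1) ^ n * hermiteFun n x := by
  rw [hermiteFun, hermiteFun, physHermite_neg, neg_sq, mul_assoc]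

lemma hasDerivAt_exp_neg_sq_div_two (x : ℝ) :
    HasDerivAt (fun y : ℝ ↦ exp (-(y ^ 2 / 2))) (-x * exp (-(x ^ 2 / 2))) x := by
  refine ((hasDerivAt_pow 2 x).div_const 2).neg.exp.congr_deriv ?_
  simp only [Pi.neg_apply]
  push_cast
  ring

lemma hasDerivAt_hermiteFun (n : ℕ) (x : ℝ) :
    HasDerivAt (hermiteFun n) (x * hermiteFun n x - hermiteFun (n + 1) x) x := by
  refine ((hasDerivAt_physHermite n x).mul (hasDerivAt_exp_neg_sq_div_two x)).congr_deriv ?_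
  simp only [hermiteFun]
  ring

lemma hasDerivAt_hermiteFun_succ (n : ℕ) (x : ℝ) :
    HasDerivAt (hermiteFun (n + 1))
      (2 * ((n : ℝ) + 1) * hermiteFun n x - x * hermiteFun (n + 1) x) x := by
  refine ((hasDerivAt_physHermite_succ n x).mul (hasDerivAt_exp_neg_sq_div_two x)).congr_deriv ?_
  simp only [hermiteFun]
  ring

lemma hasDerivAt_deriv_hermiteFun (n : ℕ) (x : ℝ) :
    HasDerivAt (fun y ↦ y * hermiteFun n y - hermiteFun (n + 1) y)
      (-((2 * n + 1 - x ^ 2) * hermiteFun n x)) x := by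
  refine (((hasDerivAt_id x).mul (hasDerivAt_hermiteFun n x)).sub
    (hasDerivAt_hermiteFun_succ n x)).congr_deriv ?_
  simp only [id]
  ring

lemma sqrt_mul_hermiteFun_sq_le {n : ℕ} {x : ℝ} (hx₀ : 0 ≤ x) (hx : x ^ 2 ≤ 2 * n) :
    √(2 * n + 1) * hermiteFun n x ^ 2 ≤
      (2 * n + 1) * physHermite n 0 ^ 2 + physHermite (n + 1) 0 ^ 2 := by
  have hone : 1 ≤ √(2 * n + 1 - x ^ 2) := one_le_sqrt.mpr (by linarith)
  calc √(2 * n + 1) * hermiteFun n x ^ 2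
      ≤ √(2 * n + 1) * √(2 * n + 1 - x ^ 2) * hermiteFun n x ^ 2 := by
        gcongr
        exact le_mul_of_one_le_right (sqrt_nonneg _) hone
    _ ≤ (2 * n + 1) * hermiteFun n 0 ^ 2 + (0 * hermiteFun n 0 - hermiteFun (n + 1) 0) ^ 2 :=
        sqrt_mul_sqrt_mul_sq_le_of_oscillator hx₀ (by linarith)
          (fun y _ ↦ hasDerivAt_hermiteFun n y) fun y _ ↦ hasDerivAt_deriv_hermiteFun n y
    _ = (2 * n + 1) * physHermite n 0 ^ 2 + physHermite (n + 1) 0 ^ 2 := by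
        rw [hermiteFun_apply_zero, hermiteFun_apply_zero]
        ring

-- For `n = 2m` this is the Wallis-type bound `(centralBinom m / 4 ^ m)² ≤ 1 / (3m + 1)`.
lemma physHermite_apply_zero_pow_four_mul_le (n : ℕ) :
    physHermite n 0 ^ 4 * (3 * n + 2) ≤ 2 * (2 ^ n * (n.factorial : ℝ)) ^ 2 := by
  induction n using Nat.twoStepInduction with
  | zero => simp [physHermite]
  | one => simp [physHermite]
  | more n ih _ =>
    have hfac : ((n + 2).factorial : ℝ) = (n + 2) * ((n + 1) * n.factorial) := by
      simp only [Nat.factorial_succ]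
      push_cast
      ring
    have hratio : ((n : ℝ) + 1) ^ 2 * (3 * n + 8) ≤ (n + 2) ^ 2 * (3 * n + 2) := by
      nlinarith [n.cast_nonneg (α := ℝ)]
    rw [physHermite_add_two, hfac]
    push_cast
    calc (2 * 0 * physHermite (n + 1) 0 - 2 * ((n : ℝ) + 1) * physHermite n 0) ^ 4
          * (3 * (n + 2) + 2)
        = 16 * (n + 1) ^ 2 * physHermite n 0 ^ 4 * ((n + 1) ^ 2 * (3 * n + 8)) := by ring
      _ ≤ 16 * (n + 1) ^ 2 * physHermite n 0 ^ 4 * ((n + 2) ^ 2 * (3 * n + 2)) := by gcongr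
      _ = 16 * (n + 1) ^ 2 * (n + 2) ^ 2 * (physHermite n 0 ^ 4 * (3 * n + 2)) := by ring
      _ ≤ 16 * (n + 1) ^ 2 * (n + 2) ^ 2 * (2 * (2 ^ n * (n.factorial : ℝ)) ^ 2) := by gcongr
      _ = 2 * (2 ^ (n + 2) * ((n + 2) * ((n + 1) * (n.factorial : ℝ)))) ^ 2 := by ring

lemma physHermite_apply_zero_pow_four_le (n : ℕ) :
    (2 * n + 1) * physHermite n 0 ^ 4 ≤ 4 / 3 * (2 ^ n * (n.factorial : ℝ)) ^ 2 := by
  have h := physHermite_apply_zero_pow_four_mul_le n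
  have : 0 ≤ physHermite n 0 ^ 4 := by positivity
  linarith

lemma physHermite_succ_zero_pow_four_le {n : ℕ} (hn : 1 ≤ n) :
    physHermite (n + 1) 0 ^ 4 ≤ 4 / 3 * (2 * n + 1) * (2 ^ n * (n.factorial : ℝ)) ^ 2 := by
  have hn' : (1 : ℝ) ≤ n := mod_cast hn
  refine le_of_mul_le_mul_right ?_ (by positivity : (0 : ℝ) < 3 * n + 5)
  calc physHermite (n + 1) 0 ^ 4 * (3 * n + 5)
      = physHermite (n + 1) 0 ^ 4 * (3 * (n + 1 : ℕ) + 2) := by push_cast; ring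
    _ ≤ 2 * (2 ^ (n + 1) * ((n + 1).factorial : ℝ)) ^ 2 :=
        physHermite_apply_zero_pow_four_mul_le (n + 1)
    _ = 8 * ((n : ℝ) + 1) ^ 2 * (2 ^ n * (n.factorial : ℝ)) ^ 2 := by
        rw [Nat.factorial_succ]
        push_cast
        ring
    _ ≤ 4 / 3 * (2 * n + 1) * (3 * n + 5) * (2 ^ n * (n.factorial : ℝ)) ^ 2 := by
        refine mul_le_mul_of_nonneg_right ?_ (sq_nonneg _)
        nlinarith
    _ = 4 / 3 * (2 * n + 1) * (2 ^ n * (n.factorial : ℝ)) ^ 2 * (3 * n + 5) := by ring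

lemma physHermite_apply_zero_energy_sq_le (n : ℕ) :
    ((2 * n + 1) * physHermite n 0 ^ 2 + physHermite (n + 1) 0 ^ 2) ^ 2 ≤
      (2 * n + 1) * (4 / 3 * (2 ^ n * (n.factorial : ℝ)) ^ 2) := by
  rcases n.even_or_odd with hn | hn
  · calc ((2 * n + 1) * physHermite n 0 ^ 2 + physHermite (n + 1) 0 ^ 2) ^ 2
        = (2 * n + 1) * ((2 * n + 1) * physHermite n 0 ^ 4) := by
          rw [physHermite_apply_zero_of_odd hn.add_one]
          ring
      _ ≤ _ := mul_le_mul_of_nonneg_left (physHermite_apply_zero_pow_four_le n) (by positivity)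
  · calc ((2 * n + 1) * physHermite n 0 ^ 2 + physHermite (n + 1) 0 ^ 2) ^ 2
        = physHermite (n + 1) 0 ^ 4 := by
          rw [physHermite_apply_zero_of_odd hn]
          ring
      _ ≤ 4 / 3 * (2 * n + 1) * (2 ^ n * (n.factorial : ℝ)) ^ 2 :=
          physHermite_succ_zero_pow_four_le hn.pos
      _ = _ := by ring

lemma hermiteFun_pow_four_le_of_sq_le {n : ℕ} {x : ℝ} (hx₀ : 0 ≤ x) (hx : x ^ 2 ≤ 2 * n) :
    hermiteFun n x ^ 4 ≤ 4 / 3 * (2 ^ n * (n.factorial : ℝ)) ^ 2 := by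
  have hN : (0 : ℝ) < 2 * n + 1 := by positivity
  refine le_of_mul_le_mul_left ?_ hN
  calc (2 * n + 1) * hermiteFun n x ^ 4 = (√(2 * n + 1) * hermiteFun n x ^ 2) ^ 2 := by
        rw [mul_pow, sq_sqrt hN.le]
        ring
    _ ≤ ((2 * n + 1) * physHermite n 0 ^ 2 + physHermite (n + 1) 0 ^ 2) ^ 2 := by
        gcongr
        exact sqrt_mul_hermiteFun_sq_le hx₀ hx
    _ ≤ _ := physHermite_apply_zero_energy_sq_le n

lemma physHermite_pos_and_mul_le_succ {n : ℕ} {x : ℝ} (hx₀ : 0 < x) (hx : 2 * n ≤ x ^ 2) :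
    0 < physHermite n x ∧ x * physHermite n x ≤ physHermite (n + 1) x := by
  induction n with
  | zero =>
    simp only [physHermite]
    exact ⟨one_pos, by linarith⟩
  | succ n ih =>
    push_cast at hx
    obtain ⟨hpos, hle⟩ := ih (by linarith)
    refine ⟨(mul_pos hx₀ hpos).trans_le hle, ?_⟩
    have hmul : 2 * ((n : ℝ) + 1) * physHermite n x ≤ x * physHermite (n + 1) x :=
      calc 2 * ((n : ℝ) + 1) * physHermite n x ≤ x ^ 2 * physHermite n x := by gcongr
        _ = x * (x * physHermite n x) := by ring
        _ ≤ x * physHermite (n + 1) x := by gcongr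
    rw [physHermite_add_two]
    linarith

lemma antitoneOn_hermiteFun (n : ℕ) : AntitoneOn (hermiteFun n) (Set.Ici √(2 * n)) := by
  refine antitoneOn_of_hasDerivWithinAt_nonpos (convex_Ici _)
    (fun x _ ↦ (hasDerivAt_hermiteFun n x).continuousAt.continuousWithinAt)
    (fun x _ ↦ (hasDerivAt_hermiteFun n x).hasDerivWithinAt) fun x hx ↦ ?_
  rw [interior_Ici, Set.mem_Ioi] at hx
  have hx₀ : 0 < x := (sqrt_nonneg _).trans_lt hx
  have hle := (physHermite_pos_and_mul_le_succ hx₀ ((sqrt_lt' hx₀).mp hx).le).2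
  simp only [hermiteFun]
  rw [← mul_assoc, ← sub_mul]
  exact mul_nonpos_of_nonpos_of_nonneg (sub_nonpos.mpr hle) (exp_pos _).le

theorem hermiteFun_pow_four_le (n : ℕ) (x : ℝ) :
    hermiteFun n x ^ 4 ≤ 4 / 3 * (2 ^ n * (n.factorial : ℝ)) ^ 2 := by
  wlog hx₀ : 0 ≤ x generalizing x
  · have hneg := this (-x) (by linarith)
    rwa [hermiteFun_neg, mul_pow, ← pow_mul, (show Even 4 by decide).mul_left n |>.neg_one_pow,
      one_mul] at hneg
  rcases le_or_gt (x ^ 2) (2 * n) with hx | hx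
  · exact hermiteFun_pow_four_le_of_sq_le hx₀ hx
  have hsqrt : √(2 * n) < x := by
    simpa only [sqrt_sq hx₀] using sqrt_lt_sqrt (by positivity) hx
  have hpos : 0 < physHermite n x :=
    (physHermite_pos_and_mul_le_succ ((sqrt_nonneg _).trans_lt hsqrt) hx.le).1
  calc hermiteFun n x ^ 4 ≤ hermiteFun n √(2 * n) ^ 4 :=
        pow_le_pow_left₀ (mul_pos hpos (exp_pos _)).le
          (antitoneOn_hermiteFun n Set.self_mem_Ici hsqrt.le hsqrt.le) 4
    _ ≤ _ := hermiteFun_pow_four_le_of_sq_le (sqrt_nonneg _) (sq_sqrt (by positivity)).le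

lemma sqrt_factorial_mul_two_rpow_pow_four (n : ℕ) :
    (√(n.factorial : ℝ) * (2 : ℝ) ^ ((n : ℝ) / 2)) ^ 4 = (2 ^ n * (n.factorial : ℝ)) ^ 2 := by
  have hsq : ((2 : ℝ) ^ ((n : ℝ) / 2)) ^ 2 = 2 ^ n := by
    rw [← rpow_mul_natCast zero_le_two, Nat.cast_ofNat, div_mul_cancel₀ _ two_ne_zero,
      rpow_natCast]
  calc (√(n.factorial : ℝ) * (2 : ℝ) ^ ((n : ℝ) / 2)) ^ 4
      = (√(n.factorial : ℝ) ^ 2 * ((2 : ℝ) ^ ((n : ℝ) / 2)) ^ 2) ^ 2 := by ring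
    _ = (2 ^ n * (n.factorial : ℝ)) ^ 2 := by rw [sq_sqrt n.factorial.cast_nonneg, hsq, mul_comm]

theorem hermite_abs_bound_general (j : ℕ) (x : ℝ) :
    |physHermite j x| ≤
      (4 / 3 : ℝ) ^ (4⁻¹ : ℝ) * √(j.factorial) * (2 : ℝ) ^ ((j : ℝ) / 2) * exp (x ^ 2 / 2) := by
  have hconst : ((4 / 3 : ℝ) ^ (4⁻¹ : ℝ)) ^ 4 = 4 / 3 := by
    exact_mod_cast rpow_inv_natCast_pow (by norm_num : (0 : ℝ) ≤ 4 / 3) four_ne_zero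
  have hfun : |hermiteFun j x| ≤
      (4 / 3 : ℝ) ^ (4⁻¹ : ℝ) * (√(j.factorial) * (2 : ℝ) ^ ((j : ℝ) / 2)) := by
    refine le_of_pow_le_pow_left₀ four_ne_zero (by positivity) ?_
    rw [mul_pow, hconst, sqrt_factorial_mul_two_rpow_pow_four, Even.pow_abs (by decide)]
    exact hermiteFun_pow_four_le j x
  rwa [hermiteFun, abs_mul, abs_exp, exp_neg, ← div_eq_mul_inv, div_le_iff₀ (exp_pos _),
    ← mul_assoc] at hfun

theorem hermite_abs_bound (j : ℕ) (x : ℝ) :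
    |physHermite j x| <
      1.086435 * Real.sqrt (Nat.factorial j) * (2:ℝ) ^ ((j : ℝ) / 2) * Real.exp (x^2 / 2) := by
  have hconst : (4 / 3 : ℝ) ^ (4⁻¹ : ℝ) < 1.086435 := by
    rw [rpow_inv_lt_iff_of_pos (by norm_num) (by norm_num) (by norm_num)]
    norm_num
  exact (hermite_abs_bound_general j x).trans_lt (by gcongr)
end

section
/- (Mehler formula at y = 0) For |ρ| < 1 and all real x: Σ_{n=0}^∞ (ρ^n / (2^n n!)) H_n(x) H_n(0) = (1/√(1−ρ²)) exp(−x² ρ²/(1−ρ²)). -/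
open Real Filter MeasureTheory

/-!
The even closed form `H₂ₘ(x) = (2m)! ∑_{k+j=m} (2x)²ᵏ/(2k)! · (-1)ʲ/j!`, read off from the
generating function `exp (2xs - s²)`, turns the series with `t = ρ²` into the double series
`∑_{k,j} (-x²t)ᵏ/k! · (k+1/2)ⱼ/j! · tʲ`, where `(a)ⱼ` is the rising factorial. It converges
absolutely, so one may sum over `j` first: by the binomial series the inner sum is
`(1-t)^(-k-1/2)`, and the sum over `k` is then `(1-t)^(-1/2)` times the exponential series of
`-x²t/(1-t)`.
-/

open Finset.HasAntidiagonal (antidiagonal mem_antidiagonal sigmaAntidiagonalEquivProd)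

lemma multichoose_succ {K : Type*} [Field K] [CharZero K] (a : K) (n : ℕ) :
    Ring.multichoose a (n + 1) = (a + n) / (n + 1) * Ring.multichoose a n := by
  have eval_ascPochhammer (k : ℕ) :
      (k.factorial : K) * Ring.multichoose a k = (ascPochhammer K k).eval a := by
    rw [← nsmul_eq_mul, Ring.factorial_nsmul_multichoose_eq_ascPochhammer,
      Polynomial.ascPochhammer_smeval_eq_eval]
  have h := eval_ascPochhammer (n + 1)
  rw [ascPochhammer_succ_eval, ← eval_ascPochhammer, Nat.factorial_succ] at h
  push_cast at h
  have hsucc : (n : K) + 1 ≠ 0 := n.cast_add_one_ne_zero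
  have hfact : (n.factorial : K) ≠ 0 := Nat.cast_ne_zero.2 n.factorial_ne_zero
  field_simp
  refine mul_left_cancel₀ hfact ?_
  linear_combination h

lemma multichoose_nonneg {K : Type*} [Field K] [LinearOrder K] [IsStrictOrderedRing K] {a : K}
    (ha : 0 ≤ a) (n : ℕ) : 0 ≤ Ring.multichoose a n := by
  induction n with
  | zero => simp
  | succ n ih => rw [multichoose_succ]; positivity

lemma multichoose_natCast_add_half {K : Type*} [Field K] [CharZero K] (k n : ℕ) :
    Ring.multichoose ((k : K) + 1 / 2) n =
      ((2 * (k + n)).factorial * k.factorial) /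
        (4 ^ n * n.factorial * (2 * k).factorial * (k + n).factorial) := by
  have hfact (i : ℕ) : (i.factorial : K) ≠ 0 := Nat.cast_ne_zero.2 i.factorial_ne_zero
  induction n with
  | zero =>
    simp only [Ring.multichoose_zero_right, add_zero, pow_zero, Nat.factorial_zero, Nat.cast_one]
    field_simp [hfact]
  | succ n ih =>
    have hn : (n : K) + 1 ≠ 0 := n.cast_add_one_ne_zero
    have hkn : (k : K) + n + 1 ≠ 0 := by exact_mod_cast (k + n).succ_ne_zero
    rw [multichoose_succ, ih, show 2 * (k + (n + 1)) = 2 * (k + n) + 1 + 1 by ring, ← add_assoc]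
    simp only [Nat.factorial_succ]
    push_cast
    field_simp [hfact]
    ring

lemma hasSum_multichoose_mul_pow (a : ℝ) {t : ℝ} (ht : |t| < 1) :
    HasSum (fun n ↦ Ring.multichoose a n * t ^ n) ((1 - t) ^ (-a)) := by
  have hmem : t ∈ Metric.eball (0 : ℝ) 1 := by
    simpa [edist_dist, ENNReal.ofReal_lt_one] using ht
  have h := (Real.one_div_one_sub_rpow_hasFPowerSeriesOnBall_zero a).hasSum hmem
  simpa [FormalMultilinearSeries.ofScalars, Ring.multichoose_eq,
    rpow_neg (sub_nonneg.2 (abs_lt.1 ht).2.le)] using h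

lemma hasSum_pow_div_factorial_mul_rpow (a y : ℝ) {t : ℝ} (ht : t < 1) :
    HasSum (fun k : ℕ ↦ y ^ k / k.factorial * (1 - t) ^ (-(k + a)))
      ((1 - t) ^ (-a) * exp (y / (1 - t))) := by
  have hpos : 0 < 1 - t := by linarith
  rw [exp_eq_exp_ℝ]
  refine ((NormedSpace.expSeries_div_hasSum_exp (y / (1 - t))).mul_left _).congr_fun fun k ↦ ?_
  rw [neg_add, rpow_add hpos, rpow_neg hpos.le, rpow_natCast, div_pow]
  field_simp

lemma summable_pow_div_factorial_mul_multichoose {a : ℝ} (ha : 0 ≤ a) (y : ℝ) {t : ℝ}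
    (ht : |t| < 1) :
    Summable fun p : ℕ × ℕ ↦
      y ^ p.1 / p.1.factorial * (Ring.multichoose (p.1 + a) p.2 * t ^ p.2) := by
  have hnonneg (p : ℕ × ℕ) : 0 ≤ Ring.multichoose (p.1 + a) p.2 :=
    multichoose_nonneg (by positivity) _
  have hinner (k : ℕ) : HasSum (fun j ↦ |y| ^ k / k.factorial *
      (Ring.multichoose (k + a) j * |t| ^ j)) (|y| ^ k / k.factorial * (1 - |t|) ^ (-(k + a))) :=
    (hasSum_multichoose_mul_pow _ (by rwa [abs_abs])).mul_left _
  suffices Summable fun p : ℕ × ℕ ↦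
      |y| ^ p.1 / p.1.factorial * (Ring.multichoose (p.1 + a) p.2 * |t| ^ p.2) from
    .of_norm <| by simpa [abs_mul, abs_div, abs_of_nonneg (hnonneg _)] using this
  refine (summable_prod_of_nonneg fun p ↦ ?_).2 ⟨fun k ↦ (hinner k).summable, ?_⟩
  · have := hnonneg p
    positivity
  · simp only [(hinner _).tsum_eq]
    exact (hasSum_pow_div_factorial_mul_rpow a |y| ht).summable

lemma hasSum_pow_div_factorial_mul_multichoose {a : ℝ} (ha : 0 ≤ a) (y : ℝ) {t : ℝ}
    (ht : |t| < 1) :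
    HasSum (fun p : ℕ × ℕ ↦
        y ^ p.1 / p.1.factorial * (Ring.multichoose (p.1 + a) p.2 * t ^ p.2))
      ((1 - t) ^ (-a) * exp (y / (1 - t))) := by
  have hsum := (summable_pow_div_factorial_mul_multichoose ha y ht).hasSum
  have hinner (k : ℕ) : HasSum
      (fun j ↦ y ^ k / k.factorial * (Ring.multichoose (k + a) j * t ^ j))
      (y ^ k / k.factorial * (1 - t) ^ (-(k + a))) :=
    (hasSum_multichoose_mul_pow _ ht).mul_left _
  have houter := hasSum_pow_div_factorial_mul_rpow a y (abs_lt.1 ht).2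
  rwa [(hsum.prod_fiberwise hinner).unique houter] at hsum

lemma hasSum_sum_antidiagonal {A α : Type*} [AddMonoid A] [Finset.HasAntidiagonal A]
    [AddCommMonoid α] [TopologicalSpace α] [ContinuousAdd α] [RegularSpace α]
    {f : A × A → α} {s : α} (hf : HasSum f s) :
    HasSum (fun n ↦ ∑ p ∈ antidiagonal n, f p) s :=
  (sigmaAntidiagonalEquivProd.hasSum_iff.2 hf).sigma
    fun n ↦ Finset.hasSum (antidiagonal n) f

/-- For `p = 0` and `p = 1`, the coefficient of `t ^ (2 * m + p)` in the generating function
`exp (2 * x * t - t ^ 2)` of the Hermite polynomials. -/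
noncomputable def hermiteGenCoeff (x : ℝ) (p m : ℕ) : ℝ :=
  ∑ q ∈ antidiagonal m,
    (2 * x) ^ (2 * q.1 + p) / (2 * q.1 + p).factorial * ((-1) ^ q.2 / q.2.factorial)

lemma hermiteGenCoeff_zero_right (x : ℝ) (p : ℕ) :
    hermiteGenCoeff x p 0 = (2 * x) ^ p / p.factorial := by
  simp [hermiteGenCoeff]

lemma mul_hermiteGenCoeff_succ (x : ℝ) (p m : ℕ) :
    (2 * ((m : ℝ) + 1) + p) * hermiteGenCoeff x p (m + 1) =
      (∑ q ∈ antidiagonal (m + 1), (2 * (q.1 : ℝ) + p) *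
        ((2 * x) ^ (2 * q.1 + p) / (2 * q.1 + p).factorial * ((-1) ^ q.2 / q.2.factorial))) -
      2 * hermiteGenCoeff x p m := by
  have hsnd : ∑ q ∈ antidiagonal (m + 1), 2 * (q.2 : ℝ) *
      ((2 * x) ^ (2 * q.1 + p) / (2 * q.1 + p).factorial * ((-1) ^ q.2 / q.2.factorial)) =
      -2 * hermiteGenCoeff x p m := by
    rw [Finset.Nat.sum_antidiagonal_succ', hermiteGenCoeff, Finset.mul_sum]
    simp only [Nat.cast_zero, mul_zero, zero_mul, zero_add, Nat.factorial_succ]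
    refine Finset.sum_congr rfl fun q _ ↦ ?_
    push_cast
    field_simp
    ring
  -- On `q.1 + q.2 = m + 1` the factor `2 * (m + 1) + p` splits as `(2 * q.1 + p) + 2 * q.2`.
  rw [sub_eq_add_neg, ← neg_mul, ← hsnd, ← Finset.sum_add_distrib, hermiteGenCoeff,
    Finset.mul_sum]
  refine Finset.sum_congr rfl fun q hq ↦ ?_
  have hm : (m : ℝ) + 1 = q.1 + q.2 := by exact_mod_cast (mem_antidiagonal.1 hq).symm
  rw [hm]
  ring

lemma mul_hermiteGenCoeff_zero_succ (x : ℝ) (m : ℕ) :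
    2 * ((m : ℝ) + 1) * hermiteGenCoeff x 0 (m + 1) =
      2 * x * hermiteGenCoeff x 1 m - 2 * hermiteGenCoeff x 0 m := by
  have h := mul_hermiteGenCoeff_succ x 0 m
  rw [Nat.cast_zero, add_zero] at h
  rw [h, sub_left_inj, Finset.Nat.sum_antidiagonal_succ, hermiteGenCoeff, Finset.mul_sum]
  simp only [Nat.cast_zero, mul_zero, zero_mul, zero_add, add_zero, mul_add_one,
    Nat.factorial_succ]
  refine Finset.sum_congr rfl fun q _ ↦ ?_
  push_cast
  field_simp
  ring

lemma mul_hermiteGenCoeff_succ_succ (x : ℝ) (p m : ℕ) :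
    (2 * ((m : ℝ) + 1) + (p + 1)) * hermiteGenCoeff x (p + 1) (m + 1) =
      2 * x * hermiteGenCoeff x p (m + 1) - 2 * hermiteGenCoeff x (p + 1) m := by
  rw [← Nat.cast_add_one p, mul_hermiteGenCoeff_succ, sub_left_inj, hermiteGenCoeff,
    Finset.mul_sum]
  refine Finset.sum_congr rfl fun q _ ↦ ?_
  rw [← add_assoc, Nat.factorial_succ]
  push_cast
  field_simp
  ring

lemma physHermite_two_mul_and_two_mul_add_one (x : ℝ) (m : ℕ) :
    physHermite (2 * m) x = (2 * m).factorial * hermiteGenCoeff x 0 m ∧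
      physHermite (2 * m + 1) x = (2 * m + 1).factorial * hermiteGenCoeff x 1 m := by
  induction m with
  | zero => simp [physHermite, hermiteGenCoeff_zero_right]
  | succ m ih =>
    obtain ⟨even, odd⟩ := ih
    have even_succ : physHermite (2 * (m + 1)) x =
        (2 * (m + 1)).factorial * hermiteGenCoeff x 0 (m + 1) := by
      rw [mul_add_one, physHermite, even, odd, Nat.factorial_succ (2 * m + 1),
        Nat.factorial_succ (2 * m)]
      push_cast
      linear_combination
        -((2 * (m : ℝ) + 1) * (2 * m).factorial) * mul_hermiteGenCoeff_zero_succ x m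
    have odd_succ : physHermite (2 * (m + 1) + 1) x =
        (2 * (m + 1) + 1).factorial * hermiteGenCoeff x 1 (m + 1) := by
      have hrec := mul_hermiteGenCoeff_succ_succ x 0 m
      rw [show 2 * (m + 1) + 1 = 2 * m + 1 + 2 by ring, physHermite, ← mul_add_one 2 m, even_succ,
        odd, mul_add_one, Nat.factorial_succ (2 * m + 2), Nat.factorial_succ (2 * m + 1)]
      push_cast at hrec ⊢
      linear_combination -((2 * (m : ℝ) + 2) * (2 * m + 1).factorial) * hrec
    exact ⟨even_succ, odd_succ⟩

lemma hermiteGenCoeff_zero_zero (m : ℕ) : hermiteGenCoeff 0 0 m = (-1) ^ m / m.factorial := by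
  rw [hermiteGenCoeff, Finset.sum_eq_single (0, m)]
  · simp
  · rintro ⟨k, j⟩ hq hne
    have hk : k ≠ 0 := by
      rintro rfl
      exact hne (by simpa using hq)
    simp [hk]
  · simp

lemma physHermite_two_mul_zero (m : ℕ) :
    physHermite (2 * m) 0 = (-1) ^ m * (2 * m).factorial / m.factorial := by
  rw [(physHermite_two_mul_and_two_mul_add_one 0 m).1, hermiteGenCoeff_zero_zero]
  ring

lemma physHermite_two_mul_add_one_zero (m : ℕ) : physHermite (2 * m + 1) 0 = 0 := by
  simp [(physHermite_two_mul_and_two_mul_add_one 0 m).2, hermiteGenCoeff]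

lemma mehler_at_zero_term_two_mul (ρ x : ℝ) (m : ℕ) :
    ρ ^ (2 * m) / (2 ^ (2 * m) * (2 * m).factorial) * physHermite (2 * m) x *
        physHermite (2 * m) 0 =
      ∑ p ∈ antidiagonal m, (-x ^ 2 * ρ ^ 2) ^ p.1 / p.1.factorial *
        (Ring.multichoose (p.1 + 1 / 2 : ℝ) p.2 * (ρ ^ 2) ^ p.2) := by
  rw [physHermite_two_mul_zero, (physHermite_two_mul_and_two_mul_add_one x m).1,
    hermiteGenCoeff, Finset.mul_sum, Finset.mul_sum, Finset.sum_mul]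
  refine Finset.sum_congr rfl fun ⟨k, j⟩ hkj ↦ ?_
  obtain rfl : k + j = m := mem_antidiagonal.1 hkj
  have hsign : (-1 : ℝ) ^ (k + j) * (-1) ^ j = (-1) ^ k := by
    rw [pow_add, mul_assoc, ← mul_pow]
    norm_num
  have hpow : (-x ^ 2 * ρ ^ 2) ^ k = (-1) ^ k * x ^ (2 * k) * ρ ^ (2 * k) := by
    rw [pow_mul, pow_mul, ← mul_pow, ← mul_pow]
    ring
  have htwo : (2 : ℝ) ^ (2 * k) * 4 ^ j = 2 ^ (2 * (k + j)) := by
    rw [show (4 : ℝ) = 2 ^ 2 by norm_num, ← pow_mul]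
    ring
  rw [multichoose_natCast_add_half, hpow, ← hsign, ← htwo, mul_pow]
  simp only [add_zero]
  field_simp
  ring

lemma hasSum_mehler_at_zero {ρ : ℝ} (hρ : |ρ| < 1) (x : ℝ) :
    HasSum (fun n : ℕ ↦
        ρ ^ n / (2 ^ n * n.factorial) * physHermite n x * physHermite n 0)
      ((√(1 - ρ ^ 2))⁻¹ * exp (-x ^ 2 * ρ ^ 2 / (1 - ρ ^ 2))) := by
  have hρ2 : |ρ ^ 2| < 1 := by rwa [abs_sq, sq_lt_one_iff_abs_lt_one]
  have hpos : 0 < 1 - ρ ^ 2 := sub_pos.2 (abs_lt.1 hρ2).2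
  rw [sqrt_eq_rpow, ← rpow_neg hpos.le, ← add_zero (_ * _)]
  refine HasSum.even_add_odd ?_ ?_
  · simpa only [mehler_at_zero_term_two_mul] using
      hasSum_sum_antidiagonal
        (hasSum_pow_div_factorial_mul_multichoose one_half_pos.le (-x ^ 2 * ρ ^ 2) hρ2)
  · simp [physHermite_two_mul_add_one_zero]

theorem mehler_at_zero (ρ x : ℝ) (hρ : |ρ| < 1) :
    ∑' n : ℕ, ρ ^ n / (2 ^ n * Nat.factorial n) * physHermite n x * physHermite n 0
      = (Real.sqrt (1 - ρ^2))⁻¹ * Real.exp (-x^2 * ρ^2 / (1 - ρ^2)) :=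
  (hasSum_mehler_at_zero hρ x).tsum_eq
end
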